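/- arXiv:2603.28734 — 4 statements merged into one kernel-verified Lean document; each statement's English description precedes it below -/
import Mathlib

section
/- Let S be a finite linearly ordered set, let (Ω, P) be a probability space, and let X, Y : Ω → S be random variables such that X ≤ Y almost surely. Then P[X ≠ Y] ≤ (|S| − 1) · d_TV(law(X), law(Y)), where law(X) and law(Y) denote the distributions (pushforward probability measures) of X and Y on S. -/
open MeasureTheory

/-!
If `X < Y`, then `s = X` is a non-maximal element of `S` with `X ≤ s < Y`. By a union bound over
the `|S| - 1` non-maximal elements it suffices that `P[X ≤ s < Y] ≤ d_TV(law X, law Y)` for every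
`s`. Since `X ≤ Y` almost surely, `P[X ≤ s < Y] = P[X ≤ s] - P[Y ≤ s]`, a difference of the two
laws on the lower set `{t | t ≤ s}`, hence at most the total variation distance
(`sum_le_half_sum_abs`).
-/

/-- For `d = μ - ν`, this is the bound `μ(A) - ν(A) ≤ d_TV(μ, ν)`: as `d` has total mass zero,
`2 d(A) = d(A) - d(Aᶜ)`. -/
lemma sum_le_half_sum_abs {S : Type*} [Fintype S] [DecidableEq S] (d : S → ℝ)
    (hd : ∑ s, d s = 0) (A : Finset S) :
    ∑ s ∈ A, d s ≤ (1 / 2) * ∑ s, |d s| := by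
  have h1 := Finset.sum_add_sum_compl A d
  have h2 := Finset.sum_add_sum_compl A (fun s => |d s|)
  have h3 : ∑ s ∈ A, d s ≤ ∑ s ∈ A, |d s| := Finset.sum_le_sum fun s _ => le_abs_self _
  have h4 : ∑ s ∈ Aᶜ, -d s ≤ ∑ s ∈ Aᶜ, |d s| := Finset.sum_le_sum fun s _ => neg_le_abs _
  rw [Finset.sum_neg_distrib] at h4
  linarith

/-- Let `S` be a finite linearly ordered set, `(Ω, P)` a probability
space, and `X, Y : Ω → S` random variables with `X ≤ Y` almost surely.  Then
`P[X ≠ Y] ≤ (|S| - 1) · d_TV(law X, law Y)`, where the total variation distance of two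
probability measures on the finite set `S` is `(1/2) ∑_{s ∈ S} |μ {s} - ν {s}|`. -/
theorem disagreement_le_card_mul_tv
    {Ω : Type*} [MeasurableSpace Ω] (P : Measure Ω) [IsProbabilityMeasure P]
    {S : Type*} [Fintype S] [LinearOrder S] [MeasurableSpace S] [MeasurableSingletonClass S]
    (X Y : Ω → S) (hX : Measurable X) (hY : Measurable Y)
    (hXY : ∀ᵐ ω ∂P, X ω ≤ Y ω) :
    (P {ω | X ω ≠ Y ω}).toReal ≤
      ((Fintype.card S : ℝ) - 1) *
        ((1 / 2) * ∑ s : S, |((P.map X) {s}).toReal - ((P.map Y) {s}).toReal|) := by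
  change P.real {ω | X ω ≠ Y ω} ≤ ((Fintype.card S : ℝ) - 1) *
    ((1 / 2) * ∑ s : S, |(P.map X).real {s} - (P.map Y).real {s}|)
  set T := (1 / 2) * ∑ s : S, |(P.map X).real {s} - (P.map Y).real {s}|
  have := P.nonempty_of_neZero
  have : Nonempty S := this.map X
  have := Measure.isProbabilityMeasure_map (μ := P) hX.aemeasurable
  have := Measure.isProbabilityMeasure_map (μ := P) hY.aemeasurable
  have key (s : S) : P.real {ω | X ω ≤ s ∧ s < Y ω} ≤ T := by
    have hA : ∑ t ∈ Finset.univ.filter (· ≤ s), ((P.map X).real {t} - (P.map Y).real {t}) ≤ T := by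
      refine sum_le_half_sum_abs _ ?_ _
      rw [Finset.sum_sub_distrib, sum_measureReal_singleton, sum_measureReal_singleton]
      simp
    have hset : ((Finset.univ.filter (· ≤ s) : Finset S) : Set S) = {t | t ≤ s} := by
      ext; simp
    have hm : MeasurableSet {t : S | t ≤ s} := (Set.toFinite _).measurableSet
    rw [Finset.sum_sub_distrib, sum_measureReal_singleton, sum_measureReal_singleton, hset,
      map_measureReal_apply hX hm, map_measureReal_apply hY hm] at hA
    have hsplit := measureReal_inter_add_sdiff (μ := P) (s := X ⁻¹' {t | t ≤ s}) (hY hm)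
    have hdiff : X ⁻¹' {t | t ≤ s} \ Y ⁻¹' {t | t ≤ s} = {ω | X ω ≤ s ∧ s < Y ω} := by
      ext; simp
    have hinter : P.real (X ⁻¹' {t | t ≤ s} ∩ Y ⁻¹' {t | t ≤ s}) = P.real (Y ⁻¹' {t | t ≤ s}) := by
      refine measureReal_congr ?_
      filter_upwards [hXY] with ω hω
      exact propext ⟨fun h => h.2, fun h => ⟨hω.trans h, h⟩⟩
    rw [hdiff] at hsplit
    linarith
  let m : S := Finset.univ.max' Finset.univ_nonempty
  have hcover : P.real {ω | X ω ≠ Y ω} ≤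
      P.real (⋃ s ∈ Finset.univ.erase m, {ω | X ω ≤ s ∧ s < Y ω}) := by
    refine ENNReal.toReal_mono (measure_ne_top _ _) (measure_mono_ae ?_)
    filter_upwards [hXY] with ω hω hne
    have hlt : X ω < Y ω := lt_of_le_of_ne hω hne
    have hXm : X ω ≠ m := (hlt.trans_le (Finset.le_max' _ _ (Finset.mem_univ _))).ne
    exact Set.mem_biUnion (x := X ω) (by simpa using hXm) ⟨le_rfl, hlt⟩
  calc _ ≤ _ := hcover
    _ ≤ ∑ s ∈ Finset.univ.erase m, P.real {ω | X ω ≤ s ∧ s < Y ω} :=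
      measureReal_biUnion_finset_le _ _
    _ ≤ ∑ s ∈ Finset.univ.erase m, T := Finset.sum_le_sum fun s _ => key s
    _ = _ := by
      rw [Finset.sum_const, Finset.card_erase_of_mem (Finset.mem_univ _), nsmul_eq_mul,
        Finset.card_univ, Nat.cast_sub Fintype.card_pos, Nat.cast_one]
end

section
/- Let (Ψ(n))_{n ≥ 0} be a sequence of positive real numbers that is monotone decreasing and tends to 0. Assume there exist κ ∈ (0,1), constants C, c > 0, and a real polynomial P satisfying P(m) ≥ 1 for every natural number m, such that for all natural numbers m, n with 1 ≤ m ≤ n one has Ψ(2n) ≤ P(m) · Ψ(⌊(1−κ)n⌋)² + C·exp(−c·m). Then Ψ(n) tends to 0 superpolynomially fast: for every A > 0, n^A · Ψ(n) → 0 as n → ∞. -/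
/-!
Write `x = Ψ(⌊(1-κ)n⌋)`. Given `ε > 0`, the recursion is applied with the least `m` such that
`C exp(-c m) ≤ (ε/2) x`. By minimality `x` is at most a constant times `exp(-c m)`, so
`P(m) x` is small as soon as `m` is large, which holds because `x → 0`; hence
`Ψ(2n) ≤ ε x`. The choice is not admissible only if `m > n`, but then minimality gives
`x ≤ (2C/ε) exp(-c n)`, and `Ψ(2n) ≤ x` by monotonicity. In both cases
`Ψ(2n) ≤ ε Ψ(⌊(1-κ)n⌋) + D exp(-c n)` for large `n`, with `D` depending on `ε`
(`renormalization_linear`).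

One such step multiplies the argument by a bounded factor `R = 6/(1-κ)`. Choosing
`ε = 1/(2 R^A)` makes the step a contraction by `1/2` for `n^A Ψ(n)`, up to a bounded error,
so `n^A Ψ(n)` is bounded for every natural `A` (`renormalization_bounded`). Using a larger
exponent turns boundedness into convergence to `0`.
-/

open Filter

lemma tendsto_eval_mul_exp_neg (P : Polynomial ℝ) {c : ℝ} (hc : 0 < c) :
    Tendsto (fun n : ℕ => P.eval (n : ℝ) * Real.exp (-c * n)) atTop (nhds 0) := by
  have h := (P.comp (Polynomial.C c⁻¹ * Polynomial.X)).tendsto_div_exp_atTop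
  have h2 : Tendsto (fun n : ℕ => c * (n : ℝ)) atTop atTop :=
    tendsto_natCast_atTop_atTop.const_mul_atTop hc
  refine (h.comp h2).congr fun n => ?_
  simp only [Function.comp, Polynomial.eval_comp, Polynomial.eval_mul, Polynomial.eval_C,
    Polynomial.eval_X]
  rw [inv_mul_cancel_left₀ hc.ne', neg_mul, Real.exp_neg, div_eq_mul_inv]

lemma tendsto_floor_mul {a : ℝ} (ha : 0 < a) :
    Tendsto (fun n : ℕ => ⌊a * (n : ℝ)⌋₊) atTop atTop :=
  tendsto_nat_floor_atTop.comp (tendsto_natCast_atTop_atTop.const_mul_atTop ha)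

/-- The quadratic recursion implies a linear one with an arbitrarily small factor and an
exponentially small error. -/
lemma renormalization_linear
    (Ψ : ℕ → ℝ) (hpos : ∀ n, 0 < Ψ n) (hanti : Antitone Ψ)
    (hlim : Tendsto Ψ atTop (nhds 0))
    (κ : ℝ) (hκ0 : 0 < κ) (hκ1 : κ < 1)
    (C c : ℝ) (hC : 0 < C) (hc : 0 < c)
    (P : Polynomial ℝ)
    (hrec : ∀ m n : ℕ, 1 ≤ m → m ≤ n →
      Ψ (2 * n) ≤ P.eval (m : ℝ) * Ψ (⌊(1 - κ) * (n : ℝ)⌋₊) ^ 2 + C * Real.exp (-c * m))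
    (ε : ℝ) (hε : 0 < ε) :
    ∃ D : ℝ, 0 < D ∧ ∀ᶠ n : ℕ in atTop,
      Ψ (2 * n) ≤ ε * Ψ (⌊(1 - κ) * (n : ℝ)⌋₊) + D * Real.exp (-c * n) := by
  obtain ⟨δ, hδ, rfl⟩ : ∃ δ : ℝ, 0 < δ ∧ ε = δ + δ := ⟨ε / 2, by linarith, by ring⟩
  have hD : 0 < C / δ := by positivity
  refine ⟨C / δ, hD, ?_⟩
  have hPexp := (tendsto_eval_mul_exp_neg P hc).const_mul (C / δ * Real.exp c)
  rw [mul_zero] at hPexp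
  obtain ⟨M, hM⟩ := eventually_atTop.1 (hPexp.eventually_lt_const hδ)
  have hx0 := hlim.comp (tendsto_floor_mul (sub_pos.2 hκ1))
  have hsmall : 0 < C / δ * Real.exp (-c * (M + 1 : ℕ)) := by positivity
  filter_upwards [hx0.eventually_lt_const hsmall] with n hn
  simp only [Function.comp] at hn
  have hle : Ψ (2 * n) ≤ Ψ ⌊(1 - κ) * (n : ℝ)⌋₊ := by
    apply hanti
    apply Nat.floor_le_of_le
    push_cast
    nlinarith [Nat.cast_nonneg (α := ℝ) n]
  set x := Ψ ⌊(1 - κ) * (n : ℝ)⌋₊ with hx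
  have hxpos : 0 < x := hpos _
  have hex : ∃ m : ℕ, C * Real.exp (-c * m) ≤ δ * x := by
    have h := (tendsto_eval_mul_exp_neg (Polynomial.C C) hc).eventually_lt_const
      (mul_pos hδ hxpos)
    simp only [Polynomial.eval_C] at h
    obtain ⟨m, hm⟩ := h.exists
    exact ⟨m, hm.le⟩
  classical
  obtain ⟨m, hm, hmin⟩ : ∃ m : ℕ, C * Real.exp (-c * m) ≤ δ * x ∧
      ∀ k < m, δ * x < C * Real.exp (-c * k) :=
    ⟨Nat.find hex, Nat.find_spec hex, fun k hk => not_le.1 (Nat.find_min hex hk)⟩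
  have hexpn : 0 < C / δ * Real.exp (-c * n) := by positivity
  have hmM : M + 1 < m := by
    by_contra! hcon
    have h1 : Real.exp (-c * (M + 1 : ℕ)) ≤ Real.exp (-c * m) := by
      apply Real.exp_le_exp.2
      have : (m : ℝ) ≤ (M + 1 : ℕ) := by exact_mod_cast hcon
      nlinarith
    have h2 : δ * x < C * Real.exp (-c * (M + 1 : ℕ)) := by
      rw [div_mul_eq_mul_div, lt_div_iff₀ hδ] at hn
      linarith
    have := mul_le_mul_of_nonneg_left h1 hC.le
    linarith
  rcases le_or_gt m n with hmn | hmn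
  · have h1 := hrec m n (by omega) hmn
    rw [← hx] at h1
    have h2 : x ≤ C / δ * Real.exp c * Real.exp (-c * m) := by
      have h3 := hmin (m - 1) (by omega)
      rw [Nat.cast_sub (by omega), show -c * ((m : ℝ) - (1 : ℕ)) = c + -c * m by push_cast; ring,
        Real.exp_add] at h3
      rw [mul_assoc, div_mul_eq_mul_div, le_div_iff₀ hδ]
      linarith
    have h4 : P.eval (m : ℝ) * x ≤ δ := by
      rcases le_or_gt (P.eval (m : ℝ)) 0 with hP | hP
      · nlinarith
      · have := mul_le_mul_of_nonneg_left h2 hP.le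
        have := hM m (by omega)
        nlinarith
    nlinarith
  · have h3 := hmin n hmn
    have h4 : x ≤ C / δ * Real.exp (-c * n) := by
      rw [div_mul_eq_mul_div, le_div_iff₀ hδ]
      linarith
    nlinarith

/-- A contractive linear recursion from scale `⌊(1-κ)n⌋` to `2n` gives polynomial decay of any
order, provided the contraction factor may be chosen arbitrarily small. -/
lemma renormalization_bounded
    (Ψ : ℕ → ℝ) (hpos : ∀ n, 0 < Ψ n) (hanti : Antitone Ψ)
    (κ : ℝ) (hκ0 : 0 < κ) (hκ1 : κ < 1) (c : ℝ) (hc : 0 < c)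
    (hlin : ∀ ε : ℝ, 0 < ε → ∃ D : ℝ, 0 < D ∧ ∀ᶠ n : ℕ in atTop,
      Ψ (2 * n) ≤ ε * Ψ (⌊(1 - κ) * (n : ℝ)⌋₊) + D * Real.exp (-c * n))
    (A : ℕ) : ∃ B : ℝ, ∀ l : ℕ, (l : ℝ) ^ A * Ψ l ≤ B := by
  have ha : 0 < 1 - κ := sub_pos.2 hκ1
  obtain ⟨R, hR⟩ : ∃ R : ℝ, R = 6 / (1 - κ) := ⟨_, rfl⟩
  have hRpos : 0 < R := by rw [hR]; positivity
  obtain ⟨D, hD, hev⟩ := hlin (1 / (2 * R ^ A)) (by positivity)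
  have herr := (tendsto_eval_mul_exp_neg (Polynomial.X ^ A) hc).const_mul (3 ^ A * D)
  rw [mul_zero] at herr
  have hfl := (tendsto_floor_mul ha).eventually_ge_atTop 1
  obtain ⟨N, hN⟩ := eventually_atTop.1
    (hev.and ((herr.eventually_lt_const one_pos).and (hfl.and (eventually_ge_atTop 1))))
  -- Below `2N` boundedness is trivial; above it the recursion applies to `n = l / 2`.
  let S : ℝ := ∑ i ∈ Finset.range (2 * N), (i : ℝ) ^ A * Ψ i
  have hterm : ∀ i : ℕ, 0 ≤ (i : ℝ) ^ A * Ψ i := fun i =>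
    mul_nonneg (by positivity) (hpos i).le
  have hS : 0 ≤ S := Finset.sum_nonneg fun i _ => hterm i
  refine ⟨S + 2, fun l => ?_⟩
  induction l using Nat.strong_induction_on with
  | _ l ih =>
    rcases lt_or_ge l (2 * N) with hl | hl
    · have : (l : ℝ) ^ A * Ψ l ≤ S :=
        Finset.single_le_sum (f := fun i : ℕ => (i : ℝ) ^ A * Ψ i) (fun i _ => hterm i)
          (Finset.mem_range.2 hl)
      linarith
    · obtain ⟨n, hn⟩ : ∃ n, n = l / 2 := ⟨_, rfl⟩
      obtain ⟨h1, h2, h3, h4⟩ := hN n (by omega)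
      have hn1 : (1 : ℝ) ≤ n := by exact_mod_cast h4
      have hkn : ⌊(1 - κ) * (n : ℝ)⌋₊ ≤ n := Nat.floor_le_of_le (by nlinarith)
      have hkfl := Nat.lt_floor_add_one ((1 - κ) * (n : ℝ))
      set k := ⌊(1 - κ) * (n : ℝ)⌋₊ with hk
      have hk1 : (1 : ℝ) ≤ k := by exact_mod_cast h3
      have hl3 : (l : ℝ) ≤ 3 * n := by
        have : l ≤ 3 * n := by omega
        exact_mod_cast this
      have hlR : (l : ℝ) ≤ R * k := by
        rw [hR, div_mul_eq_mul_div, le_div_iff₀ ha]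
        nlinarith
      have hihk := ih k (by omega)
      have hΨ : Ψ l ≤ Ψ (2 * n) := hanti (by omega)
      simp only [Polynomial.eval_pow, Polynomial.eval_X] at h2
      have hb1 : (l : ℝ) ^ A ≤ R ^ A * (k : ℝ) ^ A := by
        rw [← mul_pow]
        gcongr
      have hb2 : (l : ℝ) ^ A ≤ 3 ^ A * (n : ℝ) ^ A := by
        rw [← mul_pow]
        gcongr
      have hkpos := hpos k
      calc (l : ℝ) ^ A * Ψ l
          ≤ (l : ℝ) ^ A * (1 / (2 * R ^ A) * Ψ k + D * Real.exp (-c * n)) := by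
            gcongr
            exact hΨ.trans h1
        _ = (l : ℝ) ^ A * (1 / (2 * R ^ A) * Ψ k) + (l : ℝ) ^ A * (D * Real.exp (-c * n)) := by
            ring
        _ ≤ (R ^ A * (k : ℝ) ^ A) * (1 / (2 * R ^ A) * Ψ k)
            + (3 ^ A * (n : ℝ) ^ A) * (D * Real.exp (-c * n)) := by
            gcongr
        _ = (k : ℝ) ^ A * Ψ k / 2 + 3 ^ A * D * ((n : ℝ) ^ A * Real.exp (-c * n)) := by
            field_simp
        _ ≤ S + 2 := by linarith

/-- Let `Ψ : ℕ → ℝ` be positive, monotone decreasing, tending to `0`.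
Assume there are `κ ∈ (0,1)`, constants `C, c > 0`, and a real polynomial `P` with
`P(m) ≥ 1` for every natural `m`, such that for all naturals `1 ≤ m ≤ n`,
`Ψ(2n) ≤ P(m) Ψ(⌊(1-κ)n⌋)² + C exp(-c m)`.  Then `Ψ` decays superpolynomially:
for every `A > 0`, `n^A Ψ(n) → 0`. -/
theorem superpolynomial_decay_of_renormalization
    (Ψ : ℕ → ℝ) (hpos : ∀ n, 0 < Ψ n) (hmono : ∀ n, Ψ (n + 1) ≤ Ψ n)
    (hlim : Tendsto Ψ atTop (nhds 0))
    (κ : ℝ) (hκ0 : 0 < κ) (hκ1 : κ < 1)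
    (C c : ℝ) (hC : 0 < C) (hc : 0 < c)
    (P : Polynomial ℝ) (hP : ∀ m : ℕ, 1 ≤ P.eval (m : ℝ))
    (hrec : ∀ m n : ℕ, 1 ≤ m → m ≤ n →
      Ψ (2 * n) ≤ P.eval (m : ℝ) * Ψ (⌊(1 - κ) * (n : ℝ)⌋₊) ^ 2 + C * Real.exp (-c * m)) :
    ∀ A : ℝ, 0 < A → Tendsto (fun n : ℕ => (n : ℝ) ^ A * Ψ n) atTop (nhds 0) := by
  intro A hA
  have hanti : Antitone Ψ := antitone_nat_of_succ_le hmono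
  obtain ⟨B, hB⟩ := renormalization_bounded Ψ hpos hanti κ hκ0 hκ1 c hc
    (renormalization_linear Ψ hpos hanti hlim κ hκ0 hκ1 C c hC hc P hrec) (⌈A⌉₊ + 1)
  have h0 : Tendsto (fun n : ℕ => B / (n : ℝ)) atTop (nhds 0) :=
    tendsto_const_div_atTop_nhds_zero_nat B
  refine squeeze_zero' (Eventually.of_forall fun n =>
    mul_nonneg (Real.rpow_nonneg (Nat.cast_nonneg n) A) (hpos n).le) ?_ h0
  filter_upwards [eventually_ge_atTop 1] with n hn
  have hn1 : (1 : ℝ) ≤ n := by exact_mod_cast hn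
  have hpow : (n : ℝ) ^ A ≤ (n : ℝ) ^ ⌈A⌉₊ := by
    rw [← Real.rpow_natCast]
    exact Real.rpow_le_rpow_of_exponent_le hn1 (Nat.le_ceil A)
  rw [le_div_iff₀ (by linarith)]
  calc (n : ℝ) ^ A * Ψ n * n ≤ (n : ℝ) ^ ⌈A⌉₊ * Ψ n * n := by
        have := hpos n
        gcongr
    _ = (n : ℝ) ^ (⌈A⌉₊ + 1) * Ψ n := by ring
    _ ≤ B := hB n
end

section
/- Let a : ℕ → ℝ be a nondecreasing sequence with a(n) → ∞ as n → ∞. Let α > 1 and γ > 1 be real numbers and K ≥ 0. Assume that a(⌈α·n⌉) ≥ γ·a(n) − K for all sufficiently large n. Then for every A > 0, n^A · exp(−a(n)) → 0 as n → ∞. -/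
open Filter

/-!
Since `a n → ∞` and `γ > 1`, the recursive inequality gives, for any prescribed `D`,
`a ⌈α n⌉ ≥ a n + D` once `n` is large. Each such step enlarges the index by a factor of at most
`2 α`, so taking `D = B log (2 α)` yields `a n ≥ B log n - C` (`log_lower_bound`) for arbitrary
`B > 0`. With `B = A + 1` this gives `n ^ A * exp (-a n) ≤ exp C / n`.
-/

theorem log_lower_bound
    (a : ℕ → ℝ) (hmono : Monotone a) (hlim : Tendsto a atTop atTop)
    (α γ K : ℝ) (hα : 1 < α) (hγ : 1 < γ)
    (hrec : ∀ᶠ n : ℕ in atTop, γ * a n - K ≤ a ⌈α * (n : ℝ)⌉₊) (B : ℝ) (hB : 0 < B) :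
    ∃ C : ℝ, ∀ m : ℕ, 1 ≤ m → B * Real.log m - C ≤ a m := by
  have hα0 : 0 < α := by linarith
  have hγ0 : 0 < γ - 1 := by linarith
  -- Beyond the threshold `(K + D) / (γ - 1)`, the gain `(γ - 1) * a n - K` is at least `D`.
  obtain ⟨N, hN⟩ := eventually_atTop.1 (hrec.and ((hlim.eventually_ge_atTop
    ((K + B * Real.log (2 * α)) / (γ - 1))).and (eventually_ge_atTop 1)))
  have hN1 : 1 ≤ N := (hN N le_rfl).2.2
  refine ⟨B * Real.log (α * N) - a 0, fun m => ?_⟩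
  induction m using Nat.strong_induction_on with
  | _ m ih =>
    intro hm
    have hm0 : (0 : ℝ) < m := by exact_mod_cast hm
    have hlt : (m : ℝ) / α < ⌊(m : ℝ) / α⌋₊ + 1 := Nat.lt_floor_add_one _
    have hle : (⌊(m : ℝ) / α⌋₊ : ℝ) ≤ m / α := Nat.floor_le (by positivity)
    -- The largest index `n` with `⌈α n⌉ ≤ m`.
    generalize ⌊(m : ℝ) / α⌋₊ = n at hlt hle
    rw [div_lt_iff₀ hα0] at hlt
    rw [le_div_iff₀ hα0] at hle
    by_cases hn : N ≤ n
    · obtain ⟨h1, h2, h3⟩ := hN n hn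
      have hn1 : (1 : ℝ) ≤ n := by exact_mod_cast h3
      have hnm : n < m := by
        have : (n : ℝ) < m := by nlinarith
        exact_mod_cast this
      have h4 := ih n hnm h3
      have h5 : a ⌈α * (n : ℝ)⌉₊ ≤ a m := hmono (Nat.ceil_le.2 (by linarith))
      rw [div_le_iff₀ hγ0] at h2
      have h6 : Real.log m ≤ Real.log (2 * α) + Real.log n := by
        rw [← Real.log_mul (by positivity) (by positivity)]
        exact Real.log_le_log hm0 (by nlinarith)
      nlinarith [mul_le_mul_of_nonneg_left h6 hB.le]
    · have hn' : (n : ℝ) + 1 ≤ N := by exact_mod_cast not_le.1 hn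
      have h6 : Real.log m ≤ Real.log (α * N) := Real.log_le_log hm0 (by nlinarith)
      have := hmono (Nat.zero_le m)
      nlinarith [mul_le_mul_of_nonneg_left h6 hB.le]

/-- Let `a : ℕ → ℝ` be nondecreasing with `a n → ∞`.  Let `α > 1`,
`γ > 1` and `K ≥ 0`, and assume `a(⌈α n⌉) ≥ γ a(n) - K` for all sufficiently large `n`.
Then for every `A > 0`, `n^A exp(-a n) → 0`. -/
theorem superpolynomial_decay_of_geometric_growth
    (a : ℕ → ℝ) (hmono : Monotone a) (hlim : Tendsto a atTop atTop)
    (α γ K : ℝ) (hα : 1 < α) (hγ : 1 < γ) (hK : 0 ≤ K)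
    (hrec : ∀ᶠ n : ℕ in atTop, γ * a n - K ≤ a ⌈α * (n : ℝ)⌉₊) :
    ∀ A : ℝ, 0 < A →
      Tendsto (fun n : ℕ => (n : ℝ) ^ A * Real.exp (-a n)) atTop (nhds 0) := by
  intro A hA
  obtain ⟨C, hC⟩ := log_lower_bound a hmono hlim α γ K hα hγ hrec (A + 1) (by linarith)
  refine squeeze_zero' (Eventually.of_forall fun n => by positivity) ?_
    (tendsto_const_div_atTop_nhds_zero_nat (Real.exp C))
  filter_upwards [eventually_ge_atTop 1] with n hn
  have hn0 : (0 : ℝ) < n := by exact_mod_cast hn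
  have h : Real.exp C / n = Real.exp (C - Real.log n) := by
    rw [Real.exp_sub, Real.exp_log hn0]
  rw [h, Real.rpow_def_of_pos hn0, ← Real.exp_add]
  exact Real.exp_le_exp.2 (by linarith [hC n hn])
end

section
/- Let α > 1 and δ ∈ (0,1) be real numbers, and let b : ℕ → ℝ be a nondecreasing sequence such that b(⌈α^k⌉) · 2^{−δ·k} → ∞ as k → ∞. Then for every A > 0, n^A · exp(−b(n)) → 0 as n → ∞. -/
open Filter

/-!
For `n ≥ 1` choose `κ n` with `α ^ κ n ≤ n < α ^ (κ n + 1)`. As `n` is an integer,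
`⌈α ^ κ n⌉ ≤ n`, so monotonicity and the growth hypothesis give `b n ≥ (2 ^ δ) ^ κ n` for large `n`,
while `n ^ A ≤ exp (c * (κ n + 1))` with `c = A * log α`. Since `2 ^ δ > 1`, the exponential
`(2 ^ δ) ^ k` eventually dominates `c * (k + 1) + k`, so `n ^ A * exp (-b n) ≤ exp (-κ n) → 0`.
-/

lemma eventually_linear_le_pow (c r : ℝ) (hc : 0 < c) (hr : 1 < r) :
    ∀ᶠ k : ℕ in atTop, c * (k + 1) + k ≤ r ^ k := by
  have h := tendsto_pow_const_div_const_pow_of_one_lt 1 hr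
  have hpos : (0 : ℝ) < 1 / (2 * c + 1) := by positivity
  filter_upwards [h.eventually (gt_mem_nhds hpos), eventually_ge_atTop 1] with k hk h1
  have hk1 : (1 : ℝ) ≤ k := by exact_mod_cast h1
  have hrk : 0 < r ^ k := by positivity
  rw [div_lt_div_iff₀ hrk (by positivity)] at hk
  nlinarith

/-- Let `α > 1`, `δ ∈ (0,1)`, and let `b : ℕ → ℝ` be nondecreasing with
`b(⌈α^k⌉) 2^{-δ k} → ∞` as `k → ∞`.  Then for every `A > 0`, `n^A exp(-b n) → 0`. -/
theorem superpolynomial_decay_of_geometric_subsequence_growth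
    (α δ : ℝ) (hα : 1 < α) (hδ0 : 0 < δ) (hδ1 : δ < 1)
    (b : ℕ → ℝ) (hmono : Monotone b)
    (hgrow : Tendsto (fun k : ℕ => b ⌈α ^ k⌉₊ * (2 : ℝ) ^ (-(δ * (k : ℝ)))) atTop atTop) :
    ∀ A : ℝ, 0 < A →
      Tendsto (fun n : ℕ => (n : ℝ) ^ A * Real.exp (-b n)) atTop (nhds 0) := by
  intro A hA
  have hα0 : 0 < α := by linarith
  have hL : 0 < Real.log α := Real.log_pos hα
  have hex : ∀ n : ℕ, ∃ k : ℕ, 1 ≤ n → α ^ k ≤ n ∧ (n : ℝ) < α ^ (k + 1) := by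
    intro n
    by_cases hn : 1 ≤ n
    · obtain ⟨k, hk⟩ := exists_nat_pow_near (x := (n : ℝ)) (by exact_mod_cast hn) hα
      exact ⟨k, fun _ => hk⟩
    · exact ⟨0, fun h => absurd h hn⟩
  choose κ hκ using hex
  have hκ_top : Tendsto κ atTop atTop := by
    refine tendsto_atTop.2 fun K => ?_
    filter_upwards [eventually_ge_atTop 1, eventually_ge_atTop ⌈α ^ K⌉₊] with n h1 hn
    have h2 : α ^ K < α ^ (κ n + 1) := (Nat.ceil_le.1 hn).trans_lt (hκ n h1).2
    have := (pow_lt_pow_iff_right₀ hα).1 h2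
    omega
  have hr : (1 : ℝ) < 2 ^ δ := Real.one_lt_rpow (by norm_num) hδ0
  have hlin := eventually_linear_le_pow (A * Real.log α) (2 ^ δ) (by positivity) hr
  have hlim : Tendsto (fun n => Real.exp (-(κ n : ℝ))) atTop (nhds 0) :=
    Real.tendsto_exp_neg_atTop_nhds_zero.comp (tendsto_natCast_atTop_atTop.comp hκ_top)
  refine squeeze_zero' (Eventually.of_forall fun n => by positivity) ?_ hlim
  filter_upwards [hκ_top.eventually hlin, hκ_top.eventually (hgrow.eventually_ge_atTop 1),
    eventually_ge_atTop 1] with n h1 h2 hn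
  obtain ⟨hlo, hhi⟩ := hκ n hn
  have hn0 : (0 : ℝ) < n := by exact_mod_cast hn
  have hb : b ⌈α ^ κ n⌉₊ ≤ b n := hmono (Nat.ceil_le.2 hlo)
  have hb2 : ((2 : ℝ) ^ δ) ^ κ n ≤ b ⌈α ^ κ n⌉₊ := by
    rw [Real.rpow_neg (by norm_num), ← div_eq_mul_inv, one_le_div (by positivity),
      Real.rpow_mul (by norm_num), Real.rpow_natCast] at h2
    exact h2
  have hlog : Real.log n ≤ (κ n + 1) * Real.log α := by
    have := Real.log_le_log hn0 hhi.le
    rw [Real.log_pow] at this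
    exact_mod_cast this
  have hAlog := mul_le_mul_of_nonneg_left hlog hA.le
  rw [Real.rpow_def_of_pos hn0, ← Real.exp_add]
  apply Real.exp_le_exp.2
  nlinarith
end
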